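/- arXiv:2003.08421 — 4 statements merged into one kernel-verified Lean document; each statement's English description precedes it below -/
import Mathlib

section
/- Let N be a positive integer. For each unit i ∈ {1,…,N} fix a finite neighborhood N_i ⊆ {1,…,N}∖{i} and a characteristic θ_i in a countable type Θ. On a probability space, let ε = (ε_1,…,ε_N) be random variables with values in a measurable space E, let D : Ω → {0,1}^N and R : Ω → {0,1}^N be random vectors, and let H ⊆ {1,…,N} be a set such that almost surely R_i = 1 implies i ∈ H. Let r : {0,1} × ℕ × Θ × E → ℝ be bounded and measurable, set Y_i = r(D_i, Σ_{k∈N_i} D_k, θ_i, ε_i) and m_i(d,s) = E[r(d,s,θ_i,ε_i)]. Assume the random vector (ε_i)_{i∈H} is independent of the pair (D,R), and that Σ_{i=1}^N R_i ≥ 1 almost surely. Then for every bounded measurable weight function w : {1,…,N} × {0,1}^N × {0,1}^N → ℝ, almost surely E[ (Σ_{i=1}^N R_i)^{-1} Σ_{i : R_i = 1} w(i,D,R) Y_i | σ(D,R) ] = (Σ_{i=1}^N R_i)^{-1} Σ_{i : R_i = 1} w(i,D,R) m_i(D_i, Σ_{k∈N_i} D_k). -/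
open MeasureTheory ProbabilityTheory

theorem condExp_aux {Ω A Z : Type*} [MeasurableSpace Ω] (μ : Measure Ω) [IsProbabilityMeasure μ]
    [Fintype A] [MeasurableSpace A] [MeasurableSingletonClass A] [MeasurableSpace Z]
    (X : Ω → A) (hX : Measurable X) (V : Ω → Z) (hV : Measurable V)
    (hind : IndepFun V X μ) (G : A → Z → ℝ) (hG : ∀ a, Measurable (G a))
    (hb : ∀ a, Integrable (fun ω => G a (V ω)) μ) :
    μ[fun ω => G (X ω) (V ω) | MeasurableSpace.comap X inferInstance]
      =ᵐ[μ] fun ω => ∫ ω', G (X ω) (V ω') ∂μ := by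
  classical
  have hset : ∀ a, MeasurableSet[MeasurableSpace.comap X inferInstance] (X ⁻¹' {a}) :=
    fun a => ⟨{a}, measurableSet_singleton a, rfl⟩
  have hle : MeasurableSpace.comap X inferInstance ≤ (inferInstance : MeasurableSpace Ω) :=
    hX.comap_le
  have hsum : (fun ω => G (X ω) (V ω))
      = ∑ a : A, (X ⁻¹' {a}).indicator (fun ω => G a (V ω)) := by
    funext ω
    simp [Finset.sum_apply, Set.indicator_apply]
  have hterm : ∀ a, μ[(X ⁻¹' {a}).indicator (fun ω => G a (V ω)) |
      MeasurableSpace.comap X inferInstance]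
      =ᵐ[μ] (X ⁻¹' {a}).indicator (fun _ => ∫ ω', G a (V ω') ∂μ) := by
    intro a
    refine (condExp_indicator (hb a) (hset a)).trans ?_
    have h := condExp_indep_eq (μ := μ) (f := fun ω => G a (V ω)) hV.comap_le hle
      (((hG a).comp (comap_measurable V)).stronglyMeasurable) hind
    filter_upwards [h] with ω hω
    simp only [Set.indicator_apply, hω]
  rw [hsum]
  refine (condExp_finsetSum (fun a _ => (hb a).indicator (hle _ (hset a))) _).trans ?_
  have hall := ae_all_iff.2 hterm
  filter_upwards [hall] with ω hω
  simp only [Finset.sum_apply, hω]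
  simp [Set.indicator_apply]

/-- Conditional unbiasedness (Theorem 1) of the weighted estimator under local network
interference: if the unobservables of all potential participants (the set `H`) are
independent of the treatment-and-participation assignment `(D,R)`, then the conditional
expectation of the estimator given `σ(D,R)` equals the corresponding weighted average of
conditional means. -/
theorem stmt0
    (N : ℕ) (hN : 0 < N)
    {Θ : Type*} [Countable Θ] (θ : Fin N → Θ)
    (Nb : Fin N → Finset (Fin N)) (hNb : ∀ i, i ∉ Nb i)
    {Ω : Type*} [MeasurableSpace Ω] (μ : Measure Ω) [IsProbabilityMeasure μ]
    {E : Type*} [MeasurableSpace E]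
    (ε : Fin N → Ω → E) (hε : ∀ i, Measurable (ε i))
    (D R : Ω → Fin N → Bool) (hD : Measurable D) (hR : Measurable R)
    (H : Finset (Fin N))
    (hRH : ∀ᵐ ω ∂μ, ∀ i, R ω i = true → i ∈ H)
    (r : Bool → ℕ → Θ → E → ℝ)
    (hrmeas : ∀ d s l, Measurable (r d s l))
    (hrbdd : ∃ C : ℝ, ∀ d s l e, |r d s l e| ≤ C)
    (hindep : IndepFun (fun ω (i : H) => ε i.1 ω) (fun ω => (D ω, R ω)) μ)
    (hpos : ∀ᵐ ω ∂μ, 1 ≤ (Finset.univ.filter fun i => R ω i).card)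
    (w : Fin N → (Fin N → Bool) → (Fin N → Bool) → ℝ)
    (hwbdd : ∃ C : ℝ, ∀ i Dv Rv, |w i Dv Rv| ≤ C) :
    μ[fun ω => ((Finset.univ.filter fun i => R ω i).card : ℝ)⁻¹ *
        ∑ i ∈ Finset.univ.filter (fun i => R ω i),
          w i (D ω) (R ω) *
            r (D ω i) ((Nb i).filter fun k => D ω k).card (θ i) (ε i ω)
      | MeasurableSpace.comap (fun ω => (D ω, R ω)) inferInstance]
      =ᵐ[μ]
      fun ω => ((Finset.univ.filter fun i => R ω i).card : ℝ)⁻¹ *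
        ∑ i ∈ Finset.univ.filter (fun i => R ω i),
          w i (D ω) (R ω) *
            ∫ ω', r (D ω i) ((Nb i).filter fun k => D ω k).card (θ i) (ε i ω') ∂μ := by
  classical
  obtain ⟨C, hC⟩ := hrbdd
  let G : (Fin N → Bool) × (Fin N → Bool) → (H → E) → ℝ := fun a z =>
    ((Finset.univ.filter fun i => a.2 i).card : ℝ)⁻¹ *
        ∑ i ∈ Finset.univ.filter (fun i => a.2 i),
          w i a.1 a.2 * (if h : i ∈ H then
            r (a.1 i) ((Nb i).filter fun k => a.1 k).card (θ i) (z ⟨i, h⟩) else 0)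
  have hV : Measurable (fun ω (i : H) => ε i.1 ω) := measurable_pi_lambda _ fun i => hε i.1
  have hG : ∀ a, Measurable (G a) := by
    intro a
    refine Measurable.const_mul (Finset.measurable_sum _ fun i _ => Measurable.const_mul ?_ _) _
    by_cases h : i ∈ H
    · simp only [h, dite_true]
      exact (hrmeas _ _ _).comp (measurable_pi_apply _)
    · simp only [h, dite_false]
      exact measurable_const
  have hint : ∀ i d s, Integrable (fun ω => r d s (θ i) (ε i ω)) μ := fun i d s =>
    Integrable.of_bound ((hrmeas _ _ _).comp (hε i)).aestronglyMeasurable C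
      (Filter.Eventually.of_forall fun ω => hC _ _ _ _)
  have hint2 : ∀ (a : (Fin N → Bool) × (Fin N → Bool)) (i : Fin N),
      Integrable (fun ω => w i a.1 a.2 * (if h : i ∈ H then
            r (a.1 i) ((Nb i).filter fun k => a.1 k).card (θ i) (ε i ω) else 0)) μ := by
    intro a i
    refine Integrable.const_mul ?_ _
    by_cases h : i ∈ H
    · simp only [h, dite_true]
      exact hint _ _ _
    · simp only [h, dite_false]
      exact integrable_zero _ _ _
  have hb : ∀ a, Integrable (fun ω => G a (fun i : H => ε i.1 ω)) μ := fun a =>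
    (integrable_finset_sum _ fun i _ => hint2 a i).const_mul _
  have key := condExp_aux μ (fun ω => (D ω, R ω)) (hD.prodMk hR) _ hV hindep G hG hb
  refine (condExp_congr_ae ?_).trans (key.trans ?_)
  · filter_upwards [hRH] with ω hω
    refine congrArg _ (Finset.sum_congr rfl fun i hi => ?_)
    have h : i ∈ H := hω i (Finset.mem_filter.1 hi).2
    simp only [h, dite_true]
  · filter_upwards [hRH] with ω hω
    simp only [G]
    rw [integral_const_mul, integral_finset_sum _ fun i _ => hint2 (D ω, R ω) i]
    refine congrArg _ (Finset.sum_congr rfl fun i hi => ?_)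
    have h : i ∈ H := hω i (Finset.mem_filter.1 hi).2
    simp only [h, dite_true]
    rw [integral_const_mul]
end

section
/- Let N be a positive integer. For each unit i ∈ {1,…,N} fix a finite neighborhood N_i ⊆ {1,…,N}∖{i} and a characteristic θ_i in a countable type Θ. On a probability space, let ε = (ε_1,…,ε_N) be random variables with values in a measurable space E, let D : Ω → {0,1}^N and R : Ω → {0,1}^N be random vectors, and let H ⊆ {1,…,N} be a set such that almost surely R_i = 1 implies i ∈ H. Let r : {0,1} × ℕ × Θ × E → ℝ be bounded and measurable and set Y_i = r(D_i, Σ_{k∈N_i} D_k, θ_i, ε_i). Assume the random vector (ε_i)_{i∈H} is independent of the pair (D,R), and assume that the law of ε_i depends on i only through θ_i (i.e., ε_i and ε_j have the same distribution whenever θ_i = θ_j). Then there exists a function σ² : Θ × {0,1} × ℕ → ℝ, namely σ²(l,d,s) = Var(r(d,s,l,ε_i)) for any i with θ_i = l, such that for every i ∈ H, almost surely E[Y_i² | σ(D,R)] − (E[Y_i | σ(D,R)])² = σ²(θ_i, D_i, Σ_{k∈N_i} D_k). -/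
open MeasureTheory ProbabilityTheory

theorem condExp_helper {Ω T E : Type*} [MeasurableSpace Ω] (μ : Measure Ω)
    [IsProbabilityMeasure μ] [Fintype T] [mT : MeasurableSpace T] [MeasurableSingletonClass T]
    [MeasurableSpace E] (X : Ω → E) (hX : Measurable X) (Z : Ω → T) (hZ : Measurable Z)
    (hi : IndepFun X Z μ) (g : T → E → ℝ) (hg : ∀ t, Measurable (g t))
    (C : ℝ) (hC : ∀ t e, |g t e| ≤ C) :
    μ[fun ω => g (Z ω) (X ω) | MeasurableSpace.comap Z mT] =ᵐ[μ]
      fun ω => ∫ ω', g (Z ω) (X ω') ∂μ := by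
  classical
  have hint : ∀ t, Integrable (fun ω => g t (X ω)) μ := fun t =>
    Integrable.of_bound ((hg t).comp hX).aestronglyMeasurable C
      (Filter.Eventually.of_forall fun ω => hC t _)
  have hset : ∀ t, MeasurableSet[MeasurableSpace.comap Z mT] (Z ⁻¹' {t}) := fun t =>
    ⟨{t}, measurableSet_singleton t, rfl⟩
  have hle := hZ.comap_le
  have hsum : (fun ω => g (Z ω) (X ω)) =
      ∑ t : T, (Z ⁻¹' {t}).indicator (fun ω => g t (X ω)) := by
    funext ω
    simp [Finset.sum_apply, Set.indicator_apply]
  rw [hsum]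
  refine (condExp_finsetSum (fun t _ => (hint t).indicator (hle _ (hset t))) _).trans ?_
  have h1 : ∀ t, μ[(Z ⁻¹' {t}).indicator (fun ω => g t (X ω)) | MeasurableSpace.comap Z mT]
      =ᵐ[μ] (Z ⁻¹' {t}).indicator (fun _ => ∫ ω', g t (X ω') ∂μ) := by
    intro t
    refine (condExp_indicator (hint t) (hset t)).trans ?_
    have h2 : μ[(fun ω => g t (X ω)) | MeasurableSpace.comap Z mT]
        =ᵐ[μ] fun _ => ∫ ω', g t (X ω') ∂μ := by
      refine condExp_indep_eq hX.comap_le hle ?_ hi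
      exact ((hg t).comp (comap_measurable X)).stronglyMeasurable
    filter_upwards [h2] with ω hω
    simp only [Set.indicator_apply, hω]
  filter_upwards [ae_all_iff.2 h1] with ω hω
  simp only [Finset.sum_apply, hω]
  simp [Set.indicator_apply]

/-- Variance identification (Lemma 1, first part): under the experimental restriction and
the assumption that the law of `ε_i` depends on `i` only through `θ_i`, the conditional
variance of the outcome `Y_i = r(D_i, Σ_{k∈N_i} D_k, θ_i, ε_i)` given `σ(D,R)` is a
function `σ²(θ_i, D_i, Σ_{k∈N_i} D_k)`, namely the variance of `r(d,s,l,ε_i)`. -/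
theorem stmt1
    (N : ℕ) (hN : 0 < N)
    {Θ : Type*} [Countable Θ] (θ : Fin N → Θ)
    (Nb : Fin N → Finset (Fin N)) (hNb : ∀ i, i ∉ Nb i)
    {Ω : Type*} [MeasurableSpace Ω] (μ : Measure Ω) [IsProbabilityMeasure μ]
    {E : Type*} [MeasurableSpace E]
    (ε : Fin N → Ω → E) (hε : ∀ i, Measurable (ε i))
    (D R : Ω → Fin N → Bool) (hD : Measurable D) (hR : Measurable R)
    (H : Finset (Fin N))
    (hRH : ∀ᵐ ω ∂μ, ∀ i, R ω i = true → i ∈ H)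
    (r : Bool → ℕ → Θ → E → ℝ)
    (hrmeas : ∀ d s l, Measurable (r d s l))
    (hrbdd : ∃ C : ℝ, ∀ d s l e, |r d s l e| ≤ C)
    (hindep : IndepFun (fun ω (i : H) => ε i.1 ω) (fun ω => (D ω, R ω)) μ)
    (hdist : ∀ i j, θ i = θ j → Measure.map (ε i) μ = Measure.map (ε j) μ) :
    ∃ v : Θ → Bool → ℕ → ℝ,
      (∀ (l : Θ) (d : Bool) (s : ℕ) (i : Fin N), θ i = l →
        v l d s = variance (fun ω => r d s l (ε i ω)) μ) ∧
      ∀ i ∈ H,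
        (fun ω =>
            (μ[fun ω' =>
                (r (D ω' i) ((Nb i).filter fun k => D ω' k).card (θ i) (ε i ω')) ^ 2
              | MeasurableSpace.comap (fun ω'' => (D ω'', R ω'')) inferInstance]) ω
          - ((μ[fun ω' =>
                r (D ω' i) ((Nb i).filter fun k => D ω' k).card (θ i) (ε i ω')
              | MeasurableSpace.comap (fun ω'' => (D ω'', R ω'')) inferInstance]) ω) ^ 2)
        =ᵐ[μ]
        fun ω => v (θ i) (D ω i) ((Nb i).filter fun k => D ω k).card := by
  classical
  obtain ⟨C, hC⟩ := hrbdd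
  refine ⟨fun l d s => if h : ∃ i, θ i = l then
    variance (fun ω => r d s l (ε h.choose ω)) μ else 0, ?_, ?_⟩
  · intro l d s i hil
    have h : ∃ i, θ i = l := ⟨i, hil⟩
    simp only [dif_pos h]
    have hid : IdentDistrib (ε h.choose) (ε i) μ μ :=
      ⟨(hε _).aemeasurable, (hε _).aemeasurable, hdist _ _ (h.choose_spec.trans hil.symm)⟩
    exact (hid.comp (hrmeas d s l)).variance_eq
  · intro i hi
    have hv : ∀ d s, (if h : ∃ j, θ j = θ i then
        variance (fun ω => r d s (θ i) (ε h.choose ω)) μ else 0)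
        = variance (fun ω => r d s (θ i) (ε i ω)) μ := by
      intro d s
      have h : ∃ j, θ j = θ i := ⟨i, rfl⟩
      simp only [dif_pos h]
      have hid : IdentDistrib (ε h.choose) (ε i) μ μ :=
        ⟨(hε _).aemeasurable, (hε _).aemeasurable, hdist _ _ h.choose_spec⟩
      exact (hid.comp (hrmeas d s (θ i))).variance_eq
    have hind : IndepFun (ε i) (fun ω => (D ω, R ω)) μ :=
      hindep.comp (φ := fun x : H → E => x ⟨i, hi⟩) (measurable_pi_apply _) measurable_id
    have hZ : Measurable (fun ω => (D ω, R ω)) := hD.prodMk hR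
    have e1 := condExp_helper μ (ε i) (hε i) (fun ω => (D ω, R ω)) hZ hind
      (fun t e => r (t.1 i) ((Nb i).filter fun k => t.1 k).card (θ i) e)
      (fun t => hrmeas _ _ _) C (fun t e => hC _ _ _ _)
    have e2 := condExp_helper μ (ε i) (hε i) (fun ω => (D ω, R ω)) hZ hind
      (fun t e => (r (t.1 i) ((Nb i).filter fun k => t.1 k).card (θ i) e) ^ 2)
      (fun t => (hrmeas _ _ _).pow_const 2) (C ^ 2) (fun t e => by
        rw [abs_pow]
        exact pow_le_pow_left₀ (abs_nonneg _) (hC _ _ _ _) 2)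
    filter_upwards [e1, e2] with ω h1 h2
    rw [hv, variance_eq_sub]
    · exact congrArg₂ (fun a b : ℝ => a - b ^ 2) h2 h1
    · exact MemLp.of_bound ((hrmeas _ _ _).comp (hε i)).aestronglyMeasurable C
        (Filter.Eventually.of_forall fun ω => hC _ _ _ _)
end

section
/- Let N be a positive integer. For each unit i ∈ {1,…,N} fix a finite neighborhood N_i ⊆ {1,…,N}∖{i} (symmetric: j ∈ N_i iff i ∈ N_j) and a characteristic θ_i in a countable type Θ. On a probability space, let ε = (ε_1,…,ε_N) be random variables with values in a measurable space E, let D : Ω → {0,1}^N and R : Ω → {0,1}^N be random vectors, and let H ⊆ {1,…,N} be a set such that almost surely R_i = 1 implies i ∈ H. Let r : {0,1} × ℕ × Θ × E → ℝ be bounded and measurable and set Y_i = r(D_i, Σ_{k∈N_i} D_k, θ_i, ε_i). Assume the random vector (ε_i)_{i∈H} is independent of the pair (D,R), and assume that for any two neighbor pairs (i,j) and (i',j') with j ∈ N_i, j' ∈ N_{i'}, θ_i = θ_{i'} and θ_j = θ_{j'}, the joint law of (ε_i, ε_j) equals the joint law of (ε_{i'}, ε_{j'}). Then there exists a function η : (Θ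 × {0,1} × ℕ) × (Θ × {0,1} × ℕ) → ℝ such that for all i, j ∈ H with j ∈ N_i, almost surely E[Y_i Y_j | σ(D,R)] − E[Y_i | σ(D,R)]·E[Y_j | σ(D,R)] = η(θ_i, D_i, Σ_{k∈N_i} D_k, θ_j, D_j, Σ_{k∈N_j} D_k). -/
open MeasureTheory ProbabilityTheory

lemma condExp_finite_indep {Ω A G : Type*} [mΩ : MeasurableSpace Ω] (μ : Measure Ω)
    [IsProbabilityMeasure μ] [Fintype A] [MeasurableSpace A] [MeasurableSingletonClass A]
    [MeasurableSpace G] (W : Ω → A) (V : Ω → G) (hW : Measurable W) (hV : Measurable V)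
    (h : IndepFun V W μ) (g : A → G → ℝ) (hg : ∀ a, Measurable (g a))
    (hb : ∃ C : ℝ, ∀ a x, |g a x| ≤ C) :
    μ[fun ω => g (W ω) (V ω) | MeasurableSpace.comap W inferInstance]
      =ᵐ[μ] fun ω => ∫ ω', g (W ω) (V ω') ∂μ := by
  classical
  obtain ⟨C, hC⟩ := hb
  have hint : ∀ a, Integrable (fun ω => g a (V ω)) μ := fun a =>
    Integrable.of_bound ((hg a).comp hV).aestronglyMeasurable C
      (Filter.Eventually.of_forall fun ω => by simpa using hC a (V ω))
  have hdec : ∀ F : A → Ω → ℝ, (fun ω => F (W ω) ω)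
      = ∑ a, (W ⁻¹' {a}).indicator (F a) := by
    intro F
    ext ω
    simp [Finset.sum_apply, Set.indicator_apply]
  have hms : ∀ a, MeasurableSet[MeasurableSpace.comap W inferInstance] (W ⁻¹' {a}) :=
    fun a => ⟨{a}, measurableSet_singleton a, rfl⟩
  have hle := hW.comap_le
  rw [hdec (fun a ω => g a (V ω)), hdec (fun a _ => ∫ ω', g a (V ω') ∂μ)]
  refine (condExp_finsetSum (fun a _ => (hint a).indicator (hle _ (hms a))) _).trans ?_
  suffices hs : ∀ a, μ[(W ⁻¹' {a}).indicator (fun ω => g a (V ω)) |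
      MeasurableSpace.comap W inferInstance]
      =ᵐ[μ] (W ⁻¹' {a}).indicator (fun _ => ∫ ω', g a (V ω') ∂μ) by
    filter_upwards [ae_all_iff.2 hs] with ω hω
    simp only [Finset.sum_apply, hω]
  intro a
  refine (condExp_indicator (hint a) (hms a)).trans ?_
  have := condExp_indep_eq (μ := μ) (f := fun ω => g a (V ω)) hV.comap_le hle
    (((hg a).comp (comap_measurable V)).stronglyMeasurable) h
  filter_upwards [this] with ω hω
  simp only [Set.indicator_apply, hω]

/-- Covariance identification (Lemma 1, second part): under the experimental restriction
and the assumption that the joint law of `(ε_i, ε_j)` for neighboring pairs depends only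
on `(θ_i, θ_j)`, the conditional covariance of the outcomes `Y_i` and `Y_j` of neighboring
participants given `σ(D,R)` is a function
`η(θ_i, D_i, Σ_{k∈N_i} D_k, θ_j, D_j, Σ_{k∈N_j} D_k)`. -/
theorem stmt2
    (N : ℕ) (hN : 0 < N)
    {Θ : Type*} [Countable Θ] (θ : Fin N → Θ)
    (Nb : Fin N → Finset (Fin N)) (hNb : ∀ i, i ∉ Nb i)
    (hsym : ∀ i j, j ∈ Nb i ↔ i ∈ Nb j)
    {Ω : Type*} [MeasurableSpace Ω] (μ : Measure Ω) [IsProbabilityMeasure μ]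
    {E : Type*} [MeasurableSpace E]
    (ε : Fin N → Ω → E) (hε : ∀ i, Measurable (ε i))
    (D R : Ω → Fin N → Bool) (hD : Measurable D) (hR : Measurable R)
    (H : Finset (Fin N))
    (hRH : ∀ᵐ ω ∂μ, ∀ i, R ω i = true → i ∈ H)
    (r : Bool → ℕ → Θ → E → ℝ)
    (hrmeas : ∀ d s l, Measurable (r d s l))
    (hrbdd : ∃ C : ℝ, ∀ d s l e, |r d s l e| ≤ C)
    (hindep : IndepFun (fun ω (i : H) => ε i.1 ω) (fun ω => (D ω, R ω)) μ)
    (hpairdist : ∀ i j i' j', j ∈ Nb i → j' ∈ Nb i' → θ i = θ i' → θ j = θ j' →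
      Measure.map (fun ω => (ε i ω, ε j ω)) μ =
        Measure.map (fun ω => (ε i' ω, ε j' ω)) μ) :
    ∃ η : Θ → Bool → ℕ → Θ → Bool → ℕ → ℝ,
      ∀ i ∈ H, ∀ j ∈ H, j ∈ Nb i →
        (fun ω =>
            (μ[fun ω' =>
                (r (D ω' i) ((Nb i).filter fun k => D ω' k).card (θ i) (ε i ω')) *
                  (r (D ω' j) ((Nb j).filter fun k => D ω' k).card (θ j) (ε j ω'))
              | MeasurableSpace.comap (fun ω'' => (D ω'', R ω'')) inferInstance]) ω
          - ((μ[fun ω' =>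
                r (D ω' i) ((Nb i).filter fun k => D ω' k).card (θ i) (ε i ω')
              | MeasurableSpace.comap (fun ω'' => (D ω'', R ω'')) inferInstance]) ω) *
            ((μ[fun ω' =>
                r (D ω' j) ((Nb j).filter fun k => D ω' k).card (θ j) (ε j ω')
              | MeasurableSpace.comap (fun ω'' => (D ω'', R ω'')) inferInstance]) ω))
        =ᵐ[μ]
        fun ω => η (θ i) (D ω i) ((Nb i).filter fun k => D ω k).card
            (θ j) (D ω j) ((Nb j).filter fun k => D ω k).card := by
  classical
  obtain ⟨C, hC⟩ := hrbdd
  let cov : Fin N → Fin N → Θ → Bool → ℕ → Θ → Bool → ℕ → ℝ := fun i j l d s l' d' s' =>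
    (∫ ω, r d s l (ε i ω) * r d' s' l' (ε j ω) ∂μ)
      - (∫ ω, r d s l (ε i ω) ∂μ) * (∫ ω, r d' s' l' (ε j ω) ∂μ)
  have hcov : ∀ i j i' j', j ∈ Nb i → j' ∈ Nb i' → θ i = θ i' → θ j = θ j' →
      cov i j = cov i' j' := by
    intro i j i' j' h1 h2 h3 h4
    have hp := hpairdist i j i' j' h1 h2 h3 h4
    have key : ∀ f : E × E → ℝ, Measurable f →
        ∫ ω, f (ε i ω, ε j ω) ∂μ = ∫ ω, f (ε i' ω, ε j' ω) ∂μ := by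
      intro f hf
      rw [← integral_map (φ := fun ω => (ε i ω, ε j ω)) (f := f)
          ((hε i).prodMk (hε j)).aemeasurable hf.aestronglyMeasurable, hp,
        integral_map ((hε i').prodMk (hε j')).aemeasurable hf.aestronglyMeasurable]
    funext l d s l' d' s'
    have m1 : Measurable (fun x : E × E => r d s l x.1) :=
      (hrmeas d s l).comp measurable_fst
    have m2 : Measurable (fun x : E × E => r d' s' l' x.2) :=
      (hrmeas d' s' l').comp measurable_snd
    have e1 := key _ m1
    have e2 := key _ m2
    have e3 := key _ (m1.mul m2)
    simp only [Pi.mul_apply] at e1 e2 e3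
    simp only [cov, e1, e2, e3]
  refine ⟨fun l d s l' d' s' =>
    if h : ∃ p : Fin N × Fin N, p.2 ∈ Nb p.1 ∧ θ p.1 = l ∧ θ p.2 = l' then
      cov h.choose.1 h.choose.2 l d s l' d' s' else 0, ?_⟩
  intro i hi j hj hij
  have hV : Measurable (fun ω (i : H) => ε i.1 ω) := measurable_pi_lambda _ fun i => hε i.1
  have hW : Measurable (fun ω => (D ω, R ω)) := hD.prodMk hR
  have hm : ∀ k : H, Measurable (fun x : H → E => x k) := fun k => measurable_pi_apply k
  have A := condExp_finite_indep μ _ _ hW hV hindep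
    (fun w x => r (w.1 i) ((Nb i).filter fun k => w.1 k).card (θ i) (x ⟨i, hi⟩))
    (fun w => (hrmeas _ _ _).comp (hm _)) ⟨C, fun _ _ => hC _ _ _ _⟩
  have B := condExp_finite_indep μ _ _ hW hV hindep
    (fun w x => r (w.1 j) ((Nb j).filter fun k => w.1 k).card (θ j) (x ⟨j, hj⟩))
    (fun w => (hrmeas _ _ _).comp (hm _)) ⟨C, fun _ _ => hC _ _ _ _⟩
  have P := condExp_finite_indep μ _ _ hW hV hindep
    (fun w x => r (w.1 i) ((Nb i).filter fun k => w.1 k).card (θ i) (x ⟨i, hi⟩) *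
      r (w.1 j) ((Nb j).filter fun k => w.1 k).card (θ j) (x ⟨j, hj⟩))
    (fun w => ((hrmeas _ _ _).comp (hm _)).mul ((hrmeas _ _ _).comp (hm _)))
    ⟨C * C, fun _ x => by
      rw [abs_mul]
      exact mul_le_mul (hC _ _ _ _) (hC _ _ _ _) (abs_nonneg _)
        ((abs_nonneg _).trans (hC true 0 (θ i) (x ⟨i, hi⟩)))⟩
  filter_upwards [A, B, P] with ω hA hB hP
  have hex : ∃ p : Fin N × Fin N, p.2 ∈ Nb p.1 ∧ θ p.1 = θ i ∧ θ p.2 = θ j :=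
    ⟨(i, j), hij, rfl, rfl⟩
  have hs := hex.choose_spec
  rw [dif_pos hex, hcov _ _ i j hs.1 hij hs.2.1 hs.2.2]
  simp only [hA, hB, hP, cov]
end

section
/- Let n ≥ 1 be an integer, let each i ∈ {1,…,n} have a neighborhood N_i ⊆ {1,…,n}∖{i} with maximum degree 𝒩 = max_i |N_i|, and suppose there are constants L ≥ 0 and C̄ ≥ 0 such that |{i : |N_i| > L}| ≤ C̄ n^{3/4}. Let w_1,…,w_n be reals with |w_i| ≤ W, and let a_i and b_{ij} (i ∈ {1,…,n}, j ∈ N_i) be reals with |a_i| ≤ e_σ and |b_{ij}| ≤ e_η. Then | (1/n) Σ_{i=1}^n w_i² a_i + (1/n) Σ_{i=1}^n Σ_{j∈N_i} w_i w_j b_{ij} | ≤ W² e_σ + W² e_η ( L + C̄ 𝒩 n^{-1/4} ). -/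
/-- Deterministic core of the variance-estimator consistency result (Theorem 5):
splitting the covariance error sum over low-degree (`|N_i| ≤ L`) and high-degree nodes,
with at most `C̄ n^{3/4}` nodes of degree above `L`, yields the stated bound. -/
theorem stmt7 (n : ℕ) (hn : 1 ≤ n) (Nb : Fin n → Finset (Fin n))
    (hNb : ∀ i, i ∉ Nb i) (𝒩 : ℕ)
    (h𝒩 : 𝒩 = Finset.univ.sup fun i => (Nb i).card)
    (L Cbar : ℝ) (hL : 0 ≤ L) (hC : 0 ≤ Cbar)
    (hfew : ((Finset.univ.filter fun i => L < ((Nb i).card : ℝ)).card : ℝ) ≤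
      Cbar * (n : ℝ) ^ ((3 : ℝ) / 4))
    (W : ℝ) (w : Fin n → ℝ) (hw : ∀ i, |w i| ≤ W)
    (a : Fin n → ℝ) (eσ : ℝ) (ha : ∀ i, |a i| ≤ eσ)
    (b : Fin n → Fin n → ℝ) (eη : ℝ) (heη : 0 ≤ eη)
    (hb : ∀ i, ∀ j ∈ Nb i, |b i j| ≤ eη) :
    |(1 / (n : ℝ)) * ∑ i, w i ^ 2 * a i
        + (1 / (n : ℝ)) * ∑ i, ∑ j ∈ Nb i, w i * w j * b i j| ≤
      W ^ 2 * eσ + W ^ 2 * eη * (L + Cbar * (𝒩 : ℝ) * (n : ℝ) ^ (-(1 : ℝ) / 4)) := by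
  have hn0 : (0 : ℝ) < n := by exact_mod_cast hn
  have hW : 0 ≤ W := (abs_nonneg _).trans (hw ⟨0, hn⟩)
  have hA : |∑ i, w i ^ 2 * a i| ≤ n * (W ^ 2 * eσ) := by
    refine (Finset.abs_sum_le_sum_abs _ _).trans ?_
    refine (Finset.sum_le_card_nsmul _ _ (W ^ 2 * eσ) ?_).trans (by simp)
    intro i _
    rw [abs_mul, abs_pow]
    exact mul_le_mul (pow_le_pow_left₀ (abs_nonneg _) (hw i) 2) (ha i) (abs_nonneg _)
      (by positivity)
  have hcard : ∀ i, ((Nb i).card : ℝ) ≤ L + 𝒩 * (if L < ((Nb i).card : ℝ) then 1 else 0) := by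
    intro i
    split_ifs with h
    · have h1 : (Nb i).card ≤ 𝒩 := by
        rw [h𝒩]
        exact Finset.le_sup (f := fun i => (Nb i).card) (Finset.mem_univ i)
      have h2 : ((Nb i).card : ℝ) ≤ 𝒩 := by exact_mod_cast h1
      linarith
    · linarith
  have hsum : ∑ i, ((Nb i).card : ℝ) ≤ n * L + 𝒩 * (Cbar * (n : ℝ) ^ ((3 : ℝ) / 4)) := by
    refine (Finset.sum_le_sum fun i _ => hcard i).trans ?_
    rw [Finset.sum_add_distrib, ← Finset.mul_sum, Finset.sum_boole]
    have := mul_le_mul_of_nonneg_left hfew (Nat.cast_nonneg (α := ℝ) 𝒩)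
    simpa using this
  have hB : |∑ i, ∑ j ∈ Nb i, w i * w j * b i j| ≤
      W ^ 2 * eη * (n * L + 𝒩 * (Cbar * (n : ℝ) ^ ((3 : ℝ) / 4))) := by
    refine le_trans ?_ (mul_le_mul_of_nonneg_left hsum (by positivity))
    rw [Finset.mul_sum]
    refine (Finset.abs_sum_le_sum_abs _ _).trans (Finset.sum_le_sum fun i _ => ?_)
    refine (Finset.abs_sum_le_sum_abs _ _).trans ?_
    refine (Finset.sum_le_card_nsmul _ _ (W ^ 2 * eη) ?_).trans
      (by rw [nsmul_eq_mul, mul_comm])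
    intro j hj
    rw [abs_mul, abs_mul, pow_two]
    exact mul_le_mul (mul_le_mul (hw i) (hw j) (abs_nonneg _) hW) (hb i j hj) (abs_nonneg _)
      (by positivity)
  have hpow : (n : ℝ) ^ ((3 : ℝ) / 4) = n * (n : ℝ) ^ (-(1 : ℝ) / 4) := by
    rw [← Real.rpow_one_add' hn0.le (by norm_num)]
    norm_num
  rw [hpow] at hB
  rw [← mul_add, abs_mul, abs_of_pos (by positivity : (0 : ℝ) < 1 / n), one_div,
    inv_mul_le_iff₀ hn0]
  refine (abs_add_le _ _).trans ((add_le_add hA hB).trans (le_of_eq ?_))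
  ring
end
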